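/- Let G be an n-vertex unicyclic graph whose unique cycle has length l, and let x ∈ V(G). Then RC(x) ≤ −l³/2 + l²/2 + n(n−1)(4n+1)/6, with equality if and only if G is the lollipop graph P_n^l and x is the vertex at distance n−l from the cycle. -/

import Mathlib

open SimpleGraph Finset

attribute [local instance] Classical.propDecidable

variable {V : Type*}

/-- Degree of a vertex as a real number. -/
noncomputable def degR [Fintype V] (G : SimpleGraph V) (x : V) : ℝ :=
  ((Finset.univ.filter fun y => G.Adj x y).card : ℝ)

/-- Number of edges of a graph. -/
noncomputable def esize (G : SimpleGraph V) : ℕ := Nat.card G.edgeSet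

/-- Dirichlet energy of a potential. -/
noncomputable def energyFn [Fintype V] (G : SimpleGraph V) (φ : V → ℝ) : ℝ :=
  (1/2) * ∑ u, ∑ v, if G.Adj u v then (φ u - φ v)^2 else 0

/-- Effective resistance between two vertices (unit resistors on edges),
via the Dirichlet variational principle: the reciprocal of the minimal energy
of a potential with value 1 at `x` and 0 at `y`. -/
noncomputable def eres [Fintype V] (G : SimpleGraph V) (x y : V) : ℝ :=
  (sInf {e : ℝ | ∃ φ : V → ℝ, φ x = 1 ∧ φ y = 0 ∧ e = energyFn G φ})⁻¹

/-- The transition matrix of the simple random walk, killed at `y`. -/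
noncomputable def hitMat [Fintype V] (G : SimpleGraph V) (y : V) : Matrix V V ℝ :=
  Matrix.of fun u v => if v = y then 0 else if G.Adj u v then (degR G u)⁻¹ else 0

/-- Expected hitting time `H_{xy}` of the simple random walk from `x` to `y`,
expressed as the sum of the survival probabilities of the walk killed at `y`. -/
noncomputable def hitting [Fintype V] (G : SimpleGraph V) (x y : V) : ℝ :=
  if x = y then 0 else ∑' k : ℕ, ∑ z, (hitMat G y ^ k) x z

/-- Resistance-centrality `R(x)`. -/
noncomputable def Rres [Fintype V] (G : SimpleGraph V) (x : V) : ℝ := ∑ y, eres G x y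

/-- Weighted resistance-centrality `R^w(x)`. -/
noncomputable def Rw [Fintype V] (G : SimpleGraph V) (x : V) : ℝ :=
  ∑ y, degR G y * eres G x y

/-- Kirchhoff index `Kf(G)`. -/
noncomputable def Kf [Fintype V] (G : SimpleGraph V) : ℝ :=
  (1/2) * ∑ x, ∑ y, eres G x y

/-- Additive degree-Kirchhoff index `Kf⁺(G)`. -/
noncomputable def KfPlus [Fintype V] (G : SimpleGraph V) : ℝ :=
  (1/2) * ∑ x, ∑ y, (degR G x + degR G y) * eres G x y

/-- Multiplicative degree-Kirchhoff index `Kf*(G)`. -/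
noncomputable def KfStar [Fintype V] (G : SimpleGraph V) : ℝ :=
  (1/2) * ∑ x, ∑ y, degR G x * degR G y * eres G x y

/-- Cover cost `CC(x) = Σ_y H_{xy}`. -/
noncomputable def coverCost [Fintype V] (G : SimpleGraph V) (x : V) : ℝ :=
  ∑ y, hitting G x y

/-- Reverse cover cost `RC(x) = Σ_y H_{yx}`. -/
noncomputable def reverseCoverCost [Fintype V] (G : SimpleGraph V) (x : V) : ℝ :=
  ∑ y, hitting G y x

/-- Centrality (transmission) `D(x) = Σ_y d(x,y)`. -/
noncomputable def Dcent [Fintype V] (G : SimpleGraph V) (x : V) : ℝ :=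
  ∑ y, (G.dist x y : ℝ)

/-- Weighted centrality `D^w(x) = Σ_y deg(y)·d(x,y)`. -/
noncomputable def Dw [Fintype V] (G : SimpleGraph V) (x : V) : ℝ :=
  ∑ y, degR G y * (G.dist x y : ℝ)

/-- Wiener index `W(G)`. -/
noncomputable def Wiener [Fintype V] (G : SimpleGraph V) : ℝ :=
  (1/2) * ∑ x, ∑ y, (G.dist x y : ℝ)

/-- `D_{T}(v)`: sum of distances from `v` to the vertices of its connected
component in `G'` (used for the branch trees of a unicyclic graph). -/
noncomputable def branchD [Fintype V] (G' : SimpleGraph V) (v : V) : ℝ :=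
  ∑ u, if G'.Reachable v u then (G'.dist v u : ℝ) else 0

/-- The set of edges of the cycle `c 0 - c 1 - ⋯ - c (l-1) - c 0`. -/
def cycleEdges {l : ℕ} [NeZero l] (c : Fin l → V) : Set (Sym2 V) :=
  Set.range fun i : Fin l => s(c i, c (i + 1))

/-- Distance from a vertex to a set of vertices. -/
noncomputable def distToSet [Fintype V] (G : SimpleGraph V) (x : V) (s : Set V) : ℕ :=
  sInf {d | ∃ y ∈ s, G.dist x y = d}

/-- `v` is the center of a star. -/
def IsStarCenter (G : SimpleGraph V) (v : V) : Prop := ∀ u, u ≠ v → G.Adj v u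

/-- `G` is a star. -/
def IsStar (G : SimpleGraph V) : Prop := ∃ v, IsStarCenter G v

/-- The lollipop graph `P_n^l` : a cycle `C_l` on `0,…,l-1` together with a
path on `l,…,n-1` attached at the cycle vertex `0`. -/
def lollipop (n l : ℕ) : SimpleGraph (Fin n) :=
  SimpleGraph.fromRel (fun a b =>
    (a.val + 1 = b.val ∧ b.val < l) ∨ (a.val = 0 ∧ b.val = l - 1) ∨
    (a.val = 0 ∧ b.val = l) ∨ (l ≤ a.val ∧ a.val + 1 = b.val))

/-- The graph `S_n^l` : a cycle `C_l` on `0,…,l-1` with `n - l` pendant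
vertices `l,…,n-1` attached at the cycle vertex `0`. -/
def starCycle (n l : ℕ) : SimpleGraph (Fin n) :=
  SimpleGraph.fromRel (fun a b =>
    (a.val + 1 = b.val ∧ b.val < l) ∨ (a.val = 0 ∧ b.val = l - 1) ∨
    (a.val = 0 ∧ l ≤ b.val))

/-- The cycle graph `C_n` on `Fin n`. -/
def cycleG (n : ℕ) : SimpleGraph (Fin n) :=
  SimpleGraph.fromRel (fun a b => a.val + 1 = b.val ∨ (a.val = 0 ∧ b.val = n - 1))

/- Write `h y` for the expected hitting time of `x` from `y`; it solves `L h = deg - 2 n δ_x`, where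
`L` is the Laplacian and `n` is also the number of edges. Orient the edges of the trees towards the
cycle and those of the cycle around it. Summed over the branch at a vertex `y`, the equation becomes
Kirchhoff's law: off the cycle, `h` drops by `2 b - 1` along the edge out of `y`, where `b` is the
number of vertices of the branch, minus `n` if the branch contains `x`; on the cycle, the second
differences of `-h` are twice the sizes of the branches. Summation by parts therefore gives

  `RC(x) = ∑ b (2 b - 1) + ∑ N r * (h r - h ρ)`,

with `b` ranging over the vertices off the cycle, `r` over the cycle vertices with branch sizes
`N r`, and `ρ` the cycle vertex nearest to `x`. The first sum is bounded by elementary counting, the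
second by comparing `h` along the cycle with the parabola it would be if all the branches other than
that at `ρ` were trivial. If `T` vertices lie neither on the cycle nor on the path from `x` to it,
the estimates leave a deficit of `T (T + l) (3 l - 2) / 2`; and `T = 0` says that the graph is a
lollipop with end vertex `x`. -/

section HittingTimes

open scoped Matrix

variable [Fintype V] {G : SimpleGraph V} {x : V} {h : V → ℝ}

lemma sum_range_pow_mulVec_one {P : Matrix V V ℝ} {u : V → ℝ} (hu : u = 1 + P *ᵥ u) (K : ℕ) :
    ∑ k ∈ range K, P ^ k *ᵥ 1 = u - P ^ K *ᵥ u := by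
  induction K with
  | zero => simp
  | succ K ih =>
    have hstep : P ^ K *ᵥ u = P ^ K *ᵥ 1 + P ^ (K + 1) *ᵥ u := by
      conv_lhs => rw [hu, Matrix.mulVec_add, Matrix.mulVec_mulVec, ← pow_succ]
    rw [sum_range_succ, ih, hstep]
    abel

/- The series telescopes to `u - P ^ K *ᵥ u`; its terms tend to `0`, and they dominate the remainder
because `u` is bounded. -/
lemma hasSum_pow_mulVec_one {P : Matrix V V ℝ} {u : V → ℝ} (hP : ∀ a b, 0 ≤ P a b)
    (hu_nonneg : ∀ a, 0 ≤ u a) (hu : u = 1 + P *ᵥ u) (y : V) :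
    HasSum (fun k ↦ (P ^ k *ᵥ 1) y) (u y) := by
  have partial_sum (K : ℕ) : ∑ k ∈ range K, (P ^ k *ᵥ 1) y = u y - (P ^ K *ᵥ u) y := by
    simpa using congrFun (sum_range_pow_mulVec_one hu K) y
  have term_nonneg (k : ℕ) : 0 ≤ (P ^ k *ᵥ 1) y :=
    sum_nonneg fun z _ ↦ mul_nonneg (Matrix.pow_apply_nonneg hP k y z) zero_le_one
  have remainder_nonneg (K : ℕ) : 0 ≤ (P ^ K *ᵥ u) y :=
    sum_nonneg fun z _ ↦ mul_nonneg (Matrix.pow_apply_nonneg hP K y z) (hu_nonneg z)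
  have remainder_le (K : ℕ) : (P ^ K *ᵥ u) y ≤ (P ^ K *ᵥ 1) y * ∑ z, u z := by
    rw [Matrix.mulVec, Matrix.mulVec, dotProduct, dotProduct, sum_mul]
    refine sum_le_sum fun z _ ↦ ?_
    rw [Pi.one_apply, mul_one]
    exact mul_le_mul_of_nonneg_left (single_le_sum (fun z _ ↦ hu_nonneg z) (mem_univ z))
      (Matrix.pow_apply_nonneg hP K y z)
  have summable : Summable fun k ↦ (P ^ k *ᵥ 1) y :=
    summable_of_sum_range_le term_nonneg fun K ↦ by
      rw [partial_sum]
      exact sub_le_self _ (remainder_nonneg K)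
  have remainder_tendsto : Filter.Tendsto (fun K ↦ (P ^ K *ᵥ u) y) Filter.atTop (nhds 0) :=
    squeeze_zero remainder_nonneg remainder_le
      (by simpa using summable.tendsto_atTop_zero.mul_const (∑ z, u z))
  rw [summable.hasSum_iff_tendsto_nat]
  simpa [partial_sum] using remainder_tendsto.const_sub (u y)

lemma degR_eq_degree (G : SimpleGraph V) (y : V) : degR G y = G.degree y := by
  rw [degR, ← card_neighborFinset_eq_degree, neighborFinset_eq_filter]

lemma hitMat_nonneg (G : SimpleGraph V) (x a b : V) : 0 ≤ hitMat G x a b := by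
  simp only [hitMat, degR_eq_degree, Matrix.of_apply]
  split_ifs <;> positivity

lemma hitMat_mulVec_congr {f g : V → ℝ} (hfg : ∀ z, z ≠ x → f z = g z) :
    hitMat G x *ᵥ f = hitMat G x *ᵥ g := by
  ext y
  refine sum_congr rfl fun z _ ↦ ?_
  by_cases hz : z = x
  · simp [hitMat, hz]
  · rw [hfg z hz]

lemma hitMat_mulVec_apply (hx : h x = 0) (y : V) :
    (hitMat G x *ᵥ h) y = (G.degree y : ℝ)⁻¹ * ∑ z ∈ G.neighborFinset y, h z := by
  rw [neighborFinset_eq_filter, sum_filter, mul_sum]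
  refine sum_congr rfl fun z _ ↦ ?_
  by_cases hz : z = x
  · simp [hz, hx]
  · simp [hitMat, hz, degR_eq_degree]

lemma hitting_eq_of_first_step (hx : h x = 0) (h_nonneg : ∀ y, 0 ≤ h y)
    (hstep : ∀ y, y ≠ x → h y = 1 + (hitMat G x *ᵥ h) y) (y : V) : hitting G y x = h y := by
  rw [hitting]
  split_ifs with hyx
  · rw [hyx, hx]
  let u : V → ℝ := 1 + hitMat G x *ᵥ h
  have u_eq : u = 1 + hitMat G x *ᵥ u := by
    rw [← hitMat_mulVec_congr (f := h) (g := u) hstep]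
  have u_nonneg (a : V) : 0 ≤ u a :=
    add_nonneg zero_le_one (sum_nonneg fun z _ ↦ mul_nonneg (hitMat_nonneg G x a z) (h_nonneg z))
  have hy_eq : h y = u y := hstep y hyx
  rw [hy_eq]
  simpa [Matrix.mulVec, dotProduct] using
    (hasSum_pow_mulVec_one (hitMat_nonneg G x) u_nonneg u_eq y).tsum_eq

/- A vertex where `h` is minimal has a nonpositive Laplacian, so it can only be `x`. -/
lemma nonneg_of_lapMatrix_mulVec_pos (hx : h x = 0)
    (hpos : ∀ y, y ≠ x → 0 < (G.lapMatrix ℝ *ᵥ h) y) (y : V) : 0 ≤ h y := by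
  have : Nonempty V := ⟨x⟩
  obtain ⟨y₀, hmin⟩ := Finite.exists_min h
  have y₀_eq : y₀ = x := by
    by_contra hne
    have hle : (G.degree y₀ : ℝ) * h y₀ ≤ ∑ z ∈ G.neighborFinset y₀, h z := by
      rw [← card_neighborFinset_eq_degree, ← nsmul_eq_mul]
      exact card_nsmul_le_sum _ _ _ fun z _ ↦ hmin z
    have := hpos y₀ hne
    rw [lapMatrix_mulVec_apply] at this
    linarith
  rw [← hx, ← y₀_eq]
  exact hmin y

lemma hitting_eq_of_lapMatrix_mulVec_eq (hx : h x = 0) (hdeg : ∀ y, y ≠ x → 0 < G.degree y)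
    (hlap : ∀ y, y ≠ x → (G.lapMatrix ℝ *ᵥ h) y = G.degree y) (y : V) : hitting G y x = h y := by
  refine hitting_eq_of_first_step hx (nonneg_of_lapMatrix_mulVec_pos (G := G) hx fun y hy ↦ ?_)
    (fun y hy ↦ ?_) y
  · rw [hlap y hy]
    exact_mod_cast hdeg y hy
  · have degree_ne_zero : (G.degree y : ℝ) ≠ 0 := by exact_mod_cast (hdeg y hy).ne'
    have := hlap y hy
    rw [lapMatrix_mulVec_apply] at this
    rw [hitMat_mulVec_apply hx]
    field_simp
    linarith

lemma sum_lapMatrix_mulVec (G : SimpleGraph V) (h : V → ℝ) :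
    ∑ y, (G.lapMatrix ℝ *ᵥ h) y = 0 := by
  have hsymm : (1 : V → ℝ) ᵥ* G.lapMatrix ℝ = 0 := by
    rw [← Matrix.mulVec_transpose, (G.isSymm_lapMatrix ℝ).eq]
    exact G.lapMatrix_mulVec_const_eq_zero
  rw [← one_dotProduct, Matrix.dotProduct_mulVec, hsymm, zero_dotProduct]

/- `h ↦ L h + (∑ h) • 1` is injective, and on the hyperplane `∑ f = 0` its inverse solves
`L h = f`. -/
lemma exists_lapMatrix_mulVec_eq (hconn : G.Connected) {f : V → ℝ} (hf : ∑ y, f y = 0) :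
    ∃ h, G.lapMatrix ℝ *ᵥ h = f := by
  have : Nonempty V := hconn.nonempty
  let A : (V → ℝ) →ₗ[ℝ] (V → ℝ) :=
    (G.lapMatrix ℝ).mulVecLin + (Fintype.linearCombination ℝ fun _ ↦ 1)
  have A_apply (g : V → ℝ) (y : V) : A g y = (G.lapMatrix ℝ *ᵥ g) y + ∑ z, g z := by
    simp [A, Fintype.linearCombination_apply]
  have sum_eq_zero_of_sum_A {g : V → ℝ} (hg : ∑ y, A g y = 0) : ∑ z, g z = 0 := by
    simpa [A_apply, sum_add_distrib, sum_lapMatrix_mulVec] using hg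
  have A_injective : Function.Injective A := by
    rw [injective_iff_map_eq_zero]
    intro g hg
    have sum_g : ∑ z, g z = 0 := sum_eq_zero_of_sum_A (by simp [hg])
    have lap_g : G.lapMatrix ℝ *ᵥ g = 0 := by
      ext y
      simpa [A_apply, sum_g] using congrFun hg y
    ext y
    have g_const (z : V) : g z = g y :=
      G.lapMatrix_mulVec_eq_zero_iff_forall_reachable.mp lap_g z y (hconn.preconnected z y)
    simpa [g_const] using sum_g
  obtain ⟨h, hh⟩ := LinearMap.injective_iff_surjective.mp A_injective f
  have sum_h : ∑ z, h z = 0 := sum_eq_zero_of_sum_A (by rw [hh, hf])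
  refine ⟨h, ?_⟩
  ext y
  simpa [A_apply, sum_h] using congrFun hh y

lemma sum_degree_eq_two_mul_esize (G : SimpleGraph V) :
    ∑ y, (G.degree y : ℝ) = 2 * esize G := by
  rw [esize, Nat.card_eq_fintype_card, ← edgeFinset_card]
  exact_mod_cast G.sum_degrees_eq_twice_card_edges

theorem lapMatrix_mulVec_hitting (hconn : G.Connected) (x y : V) :
    (G.lapMatrix ℝ *ᵥ fun z ↦ hitting G z x) y
      = G.degree y - if y = x then 2 * (esize G : ℝ) else 0 := by
  obtain ⟨g, hg⟩ := exists_lapMatrix_mulVec_eq hconn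
    (f := fun y ↦ G.degree y - if y = x then 2 * (esize G : ℝ) else 0)
    (by simp [sum_degree_eq_two_mul_esize])
  have lap_const : G.lapMatrix ℝ *ᵥ (fun _ ↦ g x) = 0 :=
    G.lapMatrix_mulVec_eq_zero_iff_forall_adj.mpr fun _ _ _ ↦ rfl
  have lap_shift : G.lapMatrix ℝ *ᵥ (fun z ↦ g z - g x)
      = fun y ↦ G.degree y - if y = x then 2 * (esize G : ℝ) else 0 := by
    rw [← Pi.sub_def g fun _ ↦ g x, Matrix.mulVec_sub, lap_const, hg, sub_zero]
  have hitting_eq : (fun z ↦ hitting G z x) = fun z ↦ g z - g x := by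
    ext z
    refine hitting_eq_of_lapMatrix_mulVec_eq (h := fun z ↦ g z - g x) (sub_self _)
      (fun y hy ↦ ?_) (fun y hy ↦ ?_) z
    · have : Nontrivial V := ⟨y, x, hy⟩
      exact hconn.preconnected.degree_pos_of_nontrivial y
    · simp [lap_shift, hy]
  rw [hitting_eq, lap_shift]

lemma hitting_self (G : SimpleGraph V) (x : V) : hitting G x x = 0 := if_pos rfl

end HittingTimes

section DiscreteDirichletProblem

/-- The negated second difference `-(Δ² a) j` of a sequence, centred at `j + 1`. Zero boundary
values on `{0, …, L + 1}` are imposed by separate hypotheses. -/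
def pathLaplacian (a : ℕ → ℝ) (j : ℕ) : ℝ := 2 * a (j + 1) - a j - a (j + 2)

/-- `L + 1` times the Green function at `k` of the Dirichlet problem on `{0, …, L + 1}`. -/
noncomputable def tent (L k j : ℕ) : ℝ :=
  if j ≤ k then j * ((L : ℝ) + 1 - k) else k * ((L : ℝ) + 1 - j)

variable {L : ℕ} {a b N : ℕ → ℝ}

lemma sum_mul_pathLaplacian_comm (ha : a 0 = 0) (ha' : a (L + 1) = 0) (hb : b 0 = 0)
    (hb' : b (L + 1) = 0) :
    ∑ j ∈ range L, a (j + 1) * pathLaplacian b j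
      = ∑ j ∈ range L, b (j + 1) * pathLaplacian a j := by
  let wronskian (j : ℕ) : ℝ := a j * b (j + 1) - a (j + 1) * b j
  have telescope := sum_range_sub' wronskian L
  rw [← sub_eq_zero, ← sum_sub_distrib]
  calc ∑ j ∈ range L, (a (j + 1) * pathLaplacian b j - b (j + 1) * pathLaplacian a j)
      = ∑ j ∈ range L, (wronskian j - wronskian (j + 1)) :=
        sum_congr rfl fun j _ ↦ by simp only [pathLaplacian, wronskian]; ring
    _ = 0 := by rw [telescope]; simp [wronskian, ha, ha', hb, hb']

lemma pathLaplacian_sub (a b : ℕ → ℝ) (j : ℕ) :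
    pathLaplacian (fun i ↦ a i - b i) j = pathLaplacian a j - pathLaplacian b j := by
  simp only [pathLaplacian]
  ring

lemma pathLaplacian_tent (L k j : ℕ) :
    pathLaplacian (tent L k) j = if j + 1 = k then (L : ℝ) + 1 else 0 := by
  rcases lt_trichotomy (j + 1) k with hjk | rfl | hjk
  · have hj : j ≤ k := by omega
    have hj₂ : j + 2 ≤ k := by omega
    simp only [pathLaplacian, tent, if_pos hj, if_pos hjk.le, if_pos hj₂, if_neg hjk.ne]
    push_cast
    ring
  · simp only [pathLaplacian, tent, if_pos le_rfl, if_pos (Nat.le_succ j),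
      if_neg (Nat.not_succ_le_self (j + 1))]
    push_cast
    ring
  · have hj₂ : ¬ j + 2 ≤ k := by omega
    simp only [pathLaplacian, tent, if_neg hjk.not_ge, if_neg hj₂, if_neg hjk.ne']
    split_ifs with hj
    · obtain rfl : j = k := by omega
      push_cast
      ring
    · push_cast
      ring

lemma mul_sub_le_sq_div_four (s t : ℝ) : t * (s - t) ≤ s ^ 2 / 4 := by
  linarith [sq_nonneg (s - 2 * t)]

lemma tent_le {k : ℕ} (hk : k ≤ L) (j : ℕ) : tent L k j ≤ ((L : ℝ) + 1) ^ 2 / 4 := by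
  have hk' : (k : ℝ) ≤ L := by exact_mod_cast hk
  refine le_trans ?_ (mul_sub_le_sq_div_four _ (k : ℝ))
  rw [tent]
  split_ifs with hj
  · gcongr
    linarith
  · gcongr
    omega

lemma le_of_pathLaplacian_nonneg (hb : b 0 = 0) (hb' : b (L + 1) = 0)
    (hlap : ∀ j < L, 0 ≤ pathLaplacian b j) {k : ℕ} (hk : k < L) :
    b (k + 1) ≤ ((L : ℝ) + 1) / 4 * ∑ j ∈ range L, pathLaplacian b j := by
  have tent_zero : tent L (k + 1) 0 = 0 := by simp [tent]
  have tent_last : tent L (k + 1) (L + 1) = 0 := by simp [tent, hk.not_ge]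
  have green : ((L : ℝ) + 1) * b (k + 1)
      = ∑ j ∈ range L, tent L (k + 1) (j + 1) * pathLaplacian b j := by
    rw [sum_mul_pathLaplacian_comm tent_zero tent_last hb hb']
    simp [pathLaplacian_tent, hk, mul_comm]
  have hle : ((L : ℝ) + 1) * b (k + 1)
      ≤ ((L : ℝ) + 1) * (((L : ℝ) + 1) / 4 * ∑ j ∈ range L, pathLaplacian b j) := by
    rw [green, ← mul_assoc, mul_sum]
    refine sum_le_sum fun j hj ↦ mul_le_mul_of_nonneg_right ?_ (hlap j (mem_range.mp hj))
    exact (tent_le hk (j + 1)).trans_eq (by ring)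
  exact le_of_mul_le_mul_left hle (by positivity)

lemma pathLaplacian_mul_sub (s : ℝ) (j : ℕ) :
    pathLaplacian (fun i ↦ (i : ℝ) * (s - i)) j = 2 := by
  simp only [pathLaplacian]
  push_cast
  ring

lemma sum_mul_sub (L : ℕ) :
    ∑ j ∈ range L, ((j + 1 : ℕ) : ℝ) * (((L : ℝ) + 1) - (j + 1 : ℕ))
      = (((L : ℝ) + 1) ^ 3 - (L + 1)) / 6 := by
  have sum_range_le (s : ℝ) (K : ℕ) : ∑ j ∈ range K, ((j + 1 : ℕ) : ℝ) * (s - (j + 1 : ℕ))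
      = K * (K + 1) * (3 * s - 2 * K - 1) / 6 := by
    induction K with
    | zero => simp
    | succ K ih =>
      rw [sum_range_succ, ih]
      push_cast
      ring
  rw [sum_range_le]
  ring

lemma sum_eq_sum_mul_of_pathLaplacian (ha : a 0 = 0) (ha' : a (L + 1) = 0)
    (hlap : ∀ j < L, pathLaplacian a j = 2 * N (j + 1)) :
    ∑ j ∈ range L, a (j + 1)
      = ∑ j ∈ range L, N (j + 1) * ((j + 1 : ℕ) * ((L : ℝ) + 1 - (j + 1 : ℕ))) := by
  have green := sum_mul_pathLaplacian_comm (L := L) (b := fun i ↦ (i : ℝ) * ((L : ℝ) + 1 - i))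
    ha ha' (by simp) (by simp)
  simp only [pathLaplacian_mul_sub] at green
  rw [← sum_mul, mul_comm] at green
  have sum_lap : ∑ j ∈ range L, ((j + 1 : ℕ) * ((L : ℝ) + 1 - (j + 1 : ℕ))) * pathLaplacian a j
      = 2 * ∑ j ∈ range L, N (j + 1) * ((j + 1 : ℕ) * ((L : ℝ) + 1 - (j + 1 : ℕ))) := by
    rw [mul_sum]
    refine sum_congr rfl fun j hj ↦ ?_
    rw [hlap j (mem_range.mp hj)]
    ring
  linarith

lemma sum_mul_eq_of_pathLaplacian_eq_two (ha : a 0 = 0) (ha' : a (L + 1) = 0)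
    (hlap : ∀ j < L, pathLaplacian a j = 2) :
    ∑ j ∈ range L, a (j + 1) = (((L : ℝ) + 1) ^ 3 - (L + 1)) / 6 := by
  rw [sum_eq_sum_mul_of_pathLaplacian (N := fun _ ↦ 1) ha ha' (by simpa using hlap), ← sum_mul_sub]
  simp only [one_mul]

/- Compare `a` with the parabola `p j = j (L + 1 - j)`, which solves the problem for `N = 1`:
Green's identity with `p` evaluates `∑ a`, and the Green function bounds `a - p`. -/
lemma sum_mul_le_of_pathLaplacian (ha : a 0 = 0) (ha' : a (L + 1) = 0)
    (hlap : ∀ j < L, pathLaplacian a j = 2 * N (j + 1)) (hN : ∀ j < L, 1 ≤ N (j + 1)) {m : ℝ}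
    (hm : ∑ j ∈ range L, (N (j + 1) - 1) = m) :
    ∑ j ∈ range L, N (j + 1) * a (j + 1)
      ≤ (((L : ℝ) + 1) ^ 3 - (L + 1)) / 6 + m * ((L + 1) * (L + 1 + m) / 2) := by
  let p (j : ℕ) : ℝ := j * ((L : ℝ) + 1 - j)
  let b (j : ℕ) : ℝ := a j - p j
  have lap_b (j : ℕ) (hj : j < L) : pathLaplacian b j = 2 * (N (j + 1) - 1) := by
    rw [pathLaplacian_sub, hlap j hj, pathLaplacian_mul_sub]
    ring
  have sum_lap_b : ∑ j ∈ range L, pathLaplacian b j = 2 * m := by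
    rw [← hm, mul_sum]
    exact sum_congr rfl fun j hj ↦ lap_b j (mem_range.mp hj)
  have b_le (j : ℕ) (hj : j < L) : b (j + 1) ≤ (L + 1) * m / 2 := by
    have := le_of_pathLaplacian_nonneg (b := b) (by simp [b, p, ha]) (by simp [b, p, ha'])
      (fun j hj ↦ by linarith [lap_b j hj, hN j hj]) hj
    rw [sum_lap_b] at this
    linarith
  have p_le (j : ℕ) : p j ≤ ((L : ℝ) + 1) ^ 2 / 4 := mul_sub_le_sq_div_four _ _
  calc ∑ j ∈ range L, N (j + 1) * a (j + 1)
      = ∑ j ∈ range L, (N (j + 1) - 1) * a (j + 1) + ∑ j ∈ range L, a (j + 1) := by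
        rw [← sum_add_distrib]
        exact sum_congr rfl fun j _ ↦ by ring
    _ = ∑ j ∈ range L, (N (j + 1) - 1) * a (j + 1) + ∑ j ∈ range L, N (j + 1) * p (j + 1) := by
        rw [sum_eq_sum_mul_of_pathLaplacian ha ha' hlap]
    _ = ∑ j ∈ range L, p (j + 1)
          + ∑ j ∈ range L, (N (j + 1) - 1) * (2 * p (j + 1) + b (j + 1)) := by
        rw [← sum_add_distrib, ← sum_add_distrib]
        exact sum_congr rfl fun j _ ↦ by simp only [b]; ring
    _ ≤ ∑ j ∈ range L, p (j + 1)
          + ∑ j ∈ range L, (N (j + 1) - 1) * ((L + 1) * (L + 1 + m) / 2) := by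
        gcongr with j hj
        · linarith [hN j (mem_range.mp hj)]
        · linarith [p_le (j + 1), b_le j (mem_range.mp hj)]
    _ = (((L : ℝ) + 1) ^ 3 - (L + 1)) / 6 + m * ((L + 1) * (L + 1 + m) / 2) := by
        rw [← sum_mul, hm, sum_mul_sub]

end DiscreteDirichletProblem

section ClosedForms

lemma sum_range_mul_two_mul_sub_one (T : ℕ) :
    ∑ t ∈ range T, ((t + 1 : ℕ) : ℝ) * (2 * (t + 1 : ℕ) - 1) = T * (T + 1) * (4 * T - 1) / 6 := by
  induction T with
  | zero => simp
  | succ T ih =>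
    rw [sum_range_succ, ih]
    push_cast
    ring

/-- The closed form of `∑ j ∈ range m, j * (2 * j + 1)`, the reverse cover cost of an end vertex of
the tail of a lollipop, up to the correction made by its cycle. -/
noncomputable def tailCost (m : ℝ) : ℝ := m * (m - 1) * (4 * m + 1) / 6

lemma sum_range_sub_mul_two_mul_sub_one (n : ℝ) (D : ℕ) :
    ∑ i ∈ range D, (((i + 1 : ℕ) : ℝ) - n) * (2 * ((i + 1 : ℕ) - n) - 1)
      = tailCost n - tailCost (n - D) := by
  induction D with
  | zero => simp
  | succ D ih =>
    simp only [sum_range_succ, ih, tailCost]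
    push_cast
    ring

end ClosedForms

/-- A forest on `V`: `depth` is the distance to the root, and the roots are the vertices of depth
`0`. The parent of a root is arbitrary. -/
structure RootedForest (V : Type*) where
  parent : V → V
  depth : V → ℕ
  depth_parent : ∀ y, depth y ≠ 0 → depth (parent y) + 1 = depth y

namespace RootedForest

variable (F : RootedForest V) {x y z : V} {i j : ℕ}

lemma depth_iterate_parent (hi : i ≤ F.depth z) : F.depth (F.parent^[i] z) = F.depth z - i := by
  induction i with
  | zero => simp
  | succ i ih =>
    rw [Function.iterate_succ_apply']
    have := ih (by omega)
    have := F.depth_parent (F.parent^[i] z) (by omega)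
    omega

lemma injOn_iterate_parent (x : V) :
    Set.InjOn (fun i ↦ F.parent^[i] x) (Set.Iic (F.depth x)) := by
  intro i hi j hj hij
  rw [Set.mem_Iic] at hi hj
  have hdepth := congrArg F.depth hij
  simp only [F.depth_iterate_parent hi, F.depth_iterate_parent hj] at hdepth
  omega

/-- The root of the tree containing `y`. -/
def root (y : V) : V := F.parent^[F.depth y] y

lemma depth_root (y : V) : F.depth (F.root y) = 0 := by
  rw [root, F.depth_iterate_parent le_rfl, Nat.sub_self]

lemma sum_sub_parent_iterate (f : V → ℝ) (x : V) :
    ∑ i ∈ range (F.depth x), (f (F.parent^[i] x) - f (F.parent (F.parent^[i] x)))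
      = f x - f (F.root x) := by
  simp only [← Function.iterate_succ_apply' F.parent]
  exact sum_range_sub' (fun i ↦ f (F.parent^[i] x)) _

variable [Fintype V]

/-- The vertices whose path to the root passes through `y`. -/
noncomputable def subtree (y : V) : Finset V := {z | ∃ i ≤ F.depth z, F.parent^[i] z = y}

lemma mem_subtree : z ∈ F.subtree y ↔ ∃ i ≤ F.depth z, F.parent^[i] z = y := by
  simp [subtree]

lemma mem_subtree_iterate_parent (hi : i ≤ F.depth z) : z ∈ F.subtree (F.parent^[i] z) :=
  F.mem_subtree.mpr ⟨i, hi, rfl⟩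

lemma self_mem_subtree (y : V) : y ∈ F.subtree y :=
  F.mem_subtree_iterate_parent (Nat.zero_le _)

lemma depth_le_of_mem_subtree (hz : z ∈ F.subtree y) : F.depth y ≤ F.depth z := by
  obtain ⟨i, hi, rfl⟩ := F.mem_subtree.mp hz
  rw [F.depth_iterate_parent hi]
  exact Nat.sub_le _ _

lemma eq_of_mem_subtree_of_depth_le (hz : z ∈ F.subtree y) (hdepth : F.depth z ≤ F.depth y) :
    z = y := by
  obtain ⟨i, hi, rfl⟩ := F.mem_subtree.mp hz
  rw [F.depth_iterate_parent hi] at hdepth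
  obtain rfl | hz₀ : i = 0 ∨ F.depth z = 0 := by omega
  · rfl
  · obtain rfl : i = 0 := by omega
    rfl

lemma subtree_subset (hy : y ∈ F.subtree x) : F.subtree y ⊆ F.subtree x := by
  intro z hz
  obtain ⟨i, hi, rfl⟩ := F.mem_subtree.mp hz
  obtain ⟨j, hj, rfl⟩ := F.mem_subtree.mp hy
  rw [F.depth_iterate_parent hi] at hj
  exact F.mem_subtree.mpr ⟨j + i, by omega, Function.iterate_add_apply ..⟩

lemma parent_mem_subtree_iff (hz : F.depth z ≠ 0) :
    F.parent z ∈ F.subtree y ↔ z ∈ F.subtree y ∧ z ≠ y := by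
  have hdepth := F.depth_parent z hz
  constructor
  · intro hpz
    obtain ⟨i, hi, rfl⟩ := F.mem_subtree.mp hpz
    refine ⟨F.mem_subtree.mpr ⟨i + 1, by omega, rfl⟩, fun hzy ↦ ?_⟩
    have := F.depth_le_of_mem_subtree hpz
    rw [← hzy] at this
    omega
  · rintro ⟨hzy, hne⟩
    obtain ⟨_ | i, hi, hiz⟩ := F.mem_subtree.mp hzy
    · exact absurd hiz hne
    · exact F.mem_subtree.mpr ⟨i, by omega, hiz⟩

lemma mem_subtree_iff_root_eq (hy : F.depth y = 0) : z ∈ F.subtree y ↔ F.root z = y := by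
  constructor
  · intro hz
    obtain ⟨i, hi, rfl⟩ := F.mem_subtree.mp hz
    rw [F.depth_iterate_parent hi] at hy
    rw [root, show F.depth z = i by omega]
  · rintro rfl
    exact F.mem_subtree_iterate_parent le_rfl

lemma filter_mem_subtree_eq_image (x : V) :
    ({y | F.depth y ≠ 0 ∧ x ∈ F.subtree y} : Finset V)
      = (range (F.depth x)).image fun i ↦ F.parent^[i] x := by
  ext y
  simp only [mem_filter_univ, mem_image, mem_range]
  constructor
  · rintro ⟨hy, hxy⟩
    obtain ⟨i, hi, rfl⟩ := F.mem_subtree.mp hxy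
    rw [F.depth_iterate_parent hi] at hy
    exact ⟨i, by omega, rfl⟩
  · rintro ⟨i, hi, rfl⟩
    refine ⟨?_, F.mem_subtree_iterate_parent hi.le⟩
    rw [F.depth_iterate_parent hi.le]
    omega

lemma sum_filter_mem_subtree (g : V → ℝ) (x : V) :
    ∑ y with F.depth y ≠ 0 ∧ x ∈ F.subtree y, g y
      = ∑ i ∈ range (F.depth x), g (F.parent^[i] x) := by
  rw [filter_mem_subtree_eq_image]
  exact sum_image ((F.injOn_iterate_parent x).mono fun i hi ↦ (mem_range.mp hi).le)

/-- The number of vertices of the subtree at `y`. -/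
noncomputable def size (y : V) : ℕ := #(F.subtree y)

lemma one_le_size (y : V) : 1 ≤ F.size y := card_pos.mpr ⟨y, F.self_mem_subtree y⟩

lemma sum_eq_sum_size_mul (f : V → ℝ) :
    ∑ u, f u = ∑ y with F.depth y ≠ 0, F.size y * (f y - f (F.parent y))
      + ∑ r with F.depth r = 0, F.size r * f r := by
  have nonroot_part : ∑ u, (f u - f (F.root u))
      = ∑ y with F.depth y ≠ 0, F.size y * (f y - f (F.parent y)) := by
    simp only [← F.sum_sub_parent_iterate, ← F.sum_filter_mem_subtree fun y ↦ f y - f (F.parent y)]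
    simp only [← filter_filter, sum_filter (fun y ↦ _ ∈ F.subtree y)]
    rw [sum_comm]
    refine sum_congr rfl fun y _ ↦ ?_
    rw [← sum_filter, filter_univ_mem, sum_const, nsmul_eq_mul, size]
  have root_part : ∑ u, f (F.root u) = ∑ r with F.depth r = 0, F.size r * f r := by
    rw [← sum_fiberwise_of_maps_to (g := F.root) (t := {r | F.depth r = 0})
      fun _ _ ↦ by simp [F.depth_root]]
    refine sum_congr rfl fun r hr ↦ ?_
    have hr : F.depth r = 0 := by simpa using hr
    have fiber_eq : ({u | F.root u = r} : Finset V) = F.subtree r := by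
      ext u
      simp [F.mem_subtree_iff_root_eq hr]
    rw [fiber_eq, size, ← nsmul_eq_mul]
    exact sum_eq_card_nsmul fun u hu ↦ by rw [(F.mem_subtree_iff_root_eq hr).mp hu]
  rw [← nonroot_part, ← root_part, sum_sub_distrib]
  ring

lemma sum_size_roots : ∑ r with F.depth r = 0, (F.size r : ℝ) = Fintype.card V := by
  simpa using (F.sum_eq_sum_size_mul fun _ ↦ 1).symm

/-- The number of vertices cut off from `x` by the edge from `y` to its parent, counted negatively
when `x` itself lies in the subtree at `y`. -/
noncomputable def signedSize (x y : V) : ℝ :=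
  F.size y - if x ∈ F.subtree y then (Fintype.card V : ℝ) else 0

lemma sum_sub_eq_sum_signedSize_mul (f : V → ℝ) (x : V) :
    ∑ u, (f u - f x) = ∑ y with F.depth y ≠ 0, F.signedSize x y * (f y - f (F.parent y))
      + ∑ r with F.depth r = 0, F.size r * (f r - f (F.root x)) := by
  have path_part : ∑ y with F.depth y ≠ 0,
      (if x ∈ F.subtree y then (Fintype.card V : ℝ) else 0) * (f y - f (F.parent y))
        = Fintype.card V * (f x - f (F.root x)) := by
    simp only [ite_mul, zero_mul, ← sum_filter, filter_filter, ← mul_sum]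
    rw [F.sum_filter_mem_subtree fun y ↦ f y - f (F.parent y), F.sum_sub_parent_iterate]
  have by_parts := F.sum_eq_sum_size_mul fun u ↦ f u - f (F.root x)
  simp only [sub_sub_sub_cancel_right] at by_parts
  simp only [signedSize, sub_mul, sum_sub_distrib, path_part]
  simp only [sum_sub_distrib, sum_const, card_univ, nsmul_eq_mul] at by_parts ⊢
  linarith

/-- The vertices other than roots that do not lie on the path from `x` to its root. -/
noncomputable def offPath (x : V) : Finset V := {y | F.depth y ≠ 0 ∧ x ∉ F.subtree y}

lemma mem_offPath : y ∈ F.offPath x ↔ F.depth y ≠ 0 ∧ x ∉ F.subtree y := by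
  simp [offPath]

lemma sum_filter_depth_ne_zero (g : V → ℝ) (x : V) :
    ∑ y with F.depth y ≠ 0, g y
      = ∑ i ∈ range (F.depth x), g (F.parent^[i] x) + ∑ y ∈ F.offPath x, g y := by
  rw [← F.sum_filter_mem_subtree, offPath, ← filter_filter, ← filter_filter]
  exact (sum_filter_add_sum_filter_not _ _ _).symm

lemma card_eq_depth_add (x : V) :
    Fintype.card V = F.depth x + #{r | F.depth r = 0} + #(F.offPath x) := by
  have hsplit := F.sum_filter_depth_ne_zero (fun _ ↦ 1) x
  simp only [sum_const, nsmul_eq_mul, mul_one, card_range] at hsplit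
  norm_cast at hsplit
  have := card_filter_add_card_filter_not (s := (univ : Finset V)) fun r ↦ F.depth r = 0
  rw [card_univ] at this
  omega

lemma subtree_subset_offPath (hy : y ∈ F.offPath x) : F.subtree y ⊆ F.offPath x := by
  intro z hz
  have hy := F.mem_offPath.mp hy
  have := F.depth_le_of_mem_subtree hz
  exact F.mem_offPath.mpr ⟨by omega, fun hxz ↦ hy.2 (F.subtree_subset hz hxz)⟩

/- Removing a vertex of least depth keeps the family closed, and that vertex has at most as many
descendants as the family has members. -/
lemma sum_size_le {φ : ℕ → ℝ} (hφ : Monotone φ) (O : Finset V) (hO : ∀ o ∈ O, F.subtree o ⊆ O) :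
    ∑ o ∈ O, φ (F.size o) ≤ ∑ t ∈ range #O, φ (t + 1) := by
  induction O using Finset.induction_on_min_value F.depth with
  | empty => simp
  | insert o O ho hmin ih =>
    have closed : ∀ y ∈ O, F.subtree y ⊆ O := by
      intro y hy z hz
      refine mem_of_mem_insert_of_ne (hO y (mem_insert_of_mem hy) hz) ?_
      rintro rfl
      exact ho (F.eq_of_mem_subtree_of_depth_le hz (hmin y hy) ▸ hy)
    rw [sum_insert ho, card_insert_of_notMem ho, sum_range_succ, add_comm]
    refine add_le_add (ih closed) (hφ ?_)
    rw [← card_insert_of_notMem ho]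
    exact card_le_card (hO o (mem_insert_self o O))

lemma succ_le_size_iterate_parent (hi : i ≤ F.depth x) : i + 1 ≤ F.size (F.parent^[i] x) := by
  have hcard : #((range (i + 1)).image fun j ↦ F.parent^[j] x) = i + 1 := by
    rw [card_image_of_injOn ((F.injOn_iterate_parent x).mono fun j hj ↦ ?_), card_range]
    have := mem_range.mp hj
    exact Set.mem_Iic.mpr (by omega)
  rw [← hcard]
  refine card_le_card fun z hz ↦ ?_
  obtain ⟨j, hj, rfl⟩ := mem_image.mp hz
  have := mem_range.mp hj
  refine F.mem_subtree.mpr ⟨i - j, ?_, ?_⟩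
  · rw [F.depth_iterate_parent (by omega)]
    omega
  · rw [← Function.iterate_add_apply, Nat.sub_add_cancel (by omega)]

lemma mem_subtree_of_ne (hx : F.offPath x = ∅) (hz : z ∈ F.subtree y) (hne : z ≠ y) :
    x ∈ F.subtree z := by
  have hz₀ : F.depth z ≠ 0 := fun h ↦ hne (F.eq_of_mem_subtree_of_depth_le hz (by omega))
  have : z ∉ F.offPath x := by simp [hx]
  rw [mem_offPath] at this
  tauto

lemma size_eq_one (hx : F.offPath x = ∅) (hy : x ∉ F.subtree y) : F.size y = 1 := by
  refine card_eq_one.mpr ⟨y, eq_singleton_iff_unique_mem.mpr ⟨F.self_mem_subtree y, fun z hz ↦ ?_⟩⟩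
  by_contra hne
  exact hy (F.subtree_subset hz (F.mem_subtree_of_ne hx hz hne))

lemma size_iterate_parent (hx : F.offPath x = ∅) (hi : i ≤ F.depth x) :
    F.size (F.parent^[i] x) = i + 1 := by
  refine le_antisymm ?_ (F.succ_le_size_iterate_parent hi)
  suffices F.subtree (F.parent^[i] x) ⊆ (range (i + 1)).image fun j ↦ F.parent^[j] x from
    (card_le_card this).trans (card_image_le.trans_eq (card_range _))
  intro z hz
  rw [mem_image]
  by_cases hne : z = F.parent^[i] x
  · exact ⟨i, self_mem_range_succ i, hne.symm⟩
  · obtain ⟨j, hj, rfl⟩ := F.mem_subtree.mp (F.mem_subtree_of_ne hx hz hne)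
    have hdepth := F.depth_le_of_mem_subtree hz
    rw [F.depth_iterate_parent hi, F.depth_iterate_parent hj] at hdepth
    exact ⟨j, mem_range.mpr (by omega), rfl⟩

lemma signedSize_of_notMem (hy : x ∉ F.subtree y) : F.signedSize x y = F.size y := by
  rw [signedSize, if_neg hy, sub_zero]

lemma signedSize_iterate_parent (hi : i ≤ F.depth x) :
    F.signedSize x (F.parent^[i] x) = F.size (F.parent^[i] x) - Fintype.card V := by
  rw [signedSize, if_pos (F.mem_subtree_iterate_parent hi)]

lemma sum_offPath_signedSize_le (x : V) :
    ∑ y ∈ F.offPath x, F.signedSize x y * (2 * F.signedSize x y - 1)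
      ≤ #(F.offPath x) * (#(F.offPath x) + 1) * (4 * #(F.offPath x) - 1) / 6 := by
  have monotone : Monotone fun s : ℕ ↦ (s : ℝ) * (2 * s - 1) := by
    refine monotone_nat_of_le_succ fun s ↦ ?_
    push_cast
    nlinarith [(s.cast_nonneg : (0 : ℝ) ≤ s)]
  rw [← sum_range_mul_two_mul_sub_one]
  refine le_trans (sum_congr rfl fun y hy ↦ ?_).le
    (F.sum_size_le monotone _ fun _ ↦ F.subtree_subset_offPath)
  rw [F.signedSize_of_notMem (F.mem_offPath.mp hy).2]

lemma sum_path_signedSize_le (x : V) :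
    ∑ i ∈ range (F.depth x), F.signedSize x (F.parent^[i] x)
        * (2 * F.signedSize x (F.parent^[i] x) - 1)
      ≤ ∑ i ∈ range (F.depth x), (((i + 1 : ℕ) : ℝ) - Fintype.card V)
        * (2 * ((i + 1 : ℕ) - Fintype.card V) - 1) := by
  refine sum_le_sum fun i hi ↦ ?_
  have hi := (mem_range.mp hi).le
  have le_size : ((i + 1 : ℕ) : ℝ) ≤ F.size (F.parent^[i] x) := by
    exact_mod_cast F.succ_le_size_iterate_parent hi
  have size_le : (F.size (F.parent^[i] x) : ℝ) ≤ Fintype.card V := by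
    exact_mod_cast card_le_univ _
  rw [F.signedSize_iterate_parent hi]
  nlinarith

lemma sum_signedSize_le (x : V) :
    ∑ y with F.depth y ≠ 0, F.signedSize x y * (2 * F.signedSize x y - 1)
      ≤ tailCost (Fintype.card V) - tailCost (Fintype.card V - F.depth x)
        + #(F.offPath x) * (#(F.offPath x) + 1) * (4 * #(F.offPath x) - 1) / 6 := by
  rw [F.sum_filter_depth_ne_zero _ x]
  refine add_le_add ?_ (F.sum_offPath_signedSize_le x)
  rw [← sum_range_sub_mul_two_mul_sub_one]
  exact F.sum_path_signedSize_le x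

lemma sum_signedSize_eq (hx : F.offPath x = ∅) :
    ∑ y with F.depth y ≠ 0, F.signedSize x y * (2 * F.signedSize x y - 1)
      = tailCost (Fintype.card V) - tailCost (Fintype.card V - F.depth x) := by
  rw [F.sum_filter_depth_ne_zero _ x, hx, sum_empty, add_zero, ← sum_range_sub_mul_two_mul_sub_one]
  refine sum_congr rfl fun i hi ↦ ?_
  have hi := (mem_range.mp hi).le
  rw [F.signedSize_iterate_parent hi, F.size_iterate_parent hx hi]

end RootedForest

section DistToSet

variable [Fintype V] {G : SimpleGraph V} {s : Set V} {x y z : V}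

lemma distToSet_le (hz : z ∈ s) : distToSet G y s ≤ G.dist y z :=
  Nat.sInf_le ⟨z, hz, rfl⟩

lemma exists_dist_eq_distToSet (hs : s.Nonempty) (y : V) :
    ∃ z ∈ s, G.dist y z = distToSet G y s := by
  obtain ⟨z, hz⟩ := hs
  exact Nat.sInf_mem (s := {d | ∃ z ∈ s, G.dist y z = d}) ⟨_, z, hz, rfl⟩

lemma distToSet_eq_zero_iff (hconn : G.Connected) (hs : s.Nonempty) :
    distToSet G y s = 0 ↔ y ∈ s := by
  constructor
  · intro hy
    obtain ⟨z, hz, hdist⟩ := exists_dist_eq_distToSet (G := G) hs y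
    rw [hy, hconn.dist_eq_zero_iff] at hdist
    rwa [hdist]
  · intro hy
    simpa using distToSet_le (G := G) (y := y) hy

lemma distToSet_le_of_adj (hconn : G.Connected) (hs : s.Nonempty) (hyz : G.Adj y z) :
    distToSet G y s ≤ distToSet G z s + 1 := by
  obtain ⟨w, hw, hdist⟩ := exists_dist_eq_distToSet (G := G) hs z
  calc distToSet G y s ≤ G.dist y w := distToSet_le hw
    _ ≤ G.dist y z + G.dist z w := hconn.dist_triangle
    _ = distToSet G z s + 1 := by rw [dist_eq_one_iff_adj.mpr hyz, hdist, add_comm]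

lemma exists_adj_distToSet_add_one (hconn : G.Connected) (hs : s.Nonempty)
    (hy : distToSet G y s ≠ 0) : ∃ z, G.Adj y z ∧ distToSet G z s + 1 = distToSet G y s := by
  obtain ⟨w, hw, hdist⟩ := exists_dist_eq_distToSet (G := G) hs y
  obtain ⟨p, hp⟩ := hconn.exists_walk_length_eq_dist y w
  cases p with
  | nil => exact absurd (by rw [← hdist, dist_self]) hy
  | @cons _ z _ hyz q =>
    refine ⟨z, hyz, le_antisymm ?_ (distToSet_le_of_adj hconn hs hyz)⟩
    rw [Walk.length_cons, hdist] at hp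
    rw [← hp]
    exact Nat.succ_le_succ ((distToSet_le hw).trans (dist_le q))

end DistToSet

section Orientation

open scoped Matrix

/-- `out` orients the edges of `G` so that every vertex `y` has exactly one outgoing edge, the edge
to `out y`. -/
structure IsFunctionalOrientation (G : SimpleGraph V) (out : V → V) : Prop where
  adj_iff : ∀ a b, G.Adj a b ↔ out a = b ∨ out b = a
  out_out_ne : ∀ a, out (out a) ≠ a

variable {G : SimpleGraph V} {out : V → V}

/- The edges `s(a, out a)` are distinct, so by counting they are all the edges. -/
lemma isFunctionalOrientation_of_esize_eq_card [Fintype V] (hcard : esize G = Fintype.card V)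
    (hout : ∀ a, G.Adj a (out a)) (hout₂ : ∀ a, out (out a) ≠ a) :
    IsFunctionalOrientation G out := by
  let outEdge (a : V) : G.edgeSet := ⟨s(a, out a), hout a⟩
  have injective : Function.Injective outEdge := by
    intro a b hab
    rcases Sym2.eq_iff.mp (congrArg Subtype.val hab) with h | h
    · exact h.1
    · exact absurd (by rw [← h.1, h.2]) (hout₂ b)
  have bijective : Function.Bijective outEdge := by
    rw [Nat.bijective_iff_injective_and_card]
    exact ⟨injective, by rw [Nat.card_eq_fintype_card, ← hcard, esize]⟩
  refine ⟨fun a b ↦ ⟨fun hab ↦ ?_, ?_⟩, hout₂⟩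
  · obtain ⟨y, hy⟩ := bijective.surjective ⟨s(a, b), hab⟩
    rcases Sym2.eq_iff.mp (congrArg Subtype.val hy) with ⟨rfl, h⟩ | ⟨rfl, h⟩
    exacts [.inl h, .inr h]
  · rintro (rfl | rfl)
    exacts [hout a, (hout b).symm]

namespace IsFunctionalOrientation

variable [Fintype V]

lemma sum_neighborFinset (hG : IsFunctionalOrientation G out) (g : V → ℝ) (y : V) :
    ∑ z ∈ G.neighborFinset y, g z = g (out y) + ∑ z with out z = y, g z := by
  have hy : out y ∉ ({z | out z = y} : Finset V) := by simpa using hG.out_out_ne y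
  rw [← sum_insert hy]
  refine sum_congr ?_ fun _ _ ↦ rfl
  ext z
  simp [hG.adj_iff, eq_comm]

lemma lapMatrix_mulVec_sub_degree (hG : IsFunctionalOrientation G out) (h : V → ℝ) (y : V) :
    (G.lapMatrix ℝ *ᵥ h) y - G.degree y
      = (h y - h (out y) - 1) - ∑ z with out z = y, (h z - h (out z) + 1) := by
  have degree_eq : (G.degree y : ℝ) = 1 + ∑ z with out z = y, 1 := by
    rw [← hG.sum_neighborFinset fun _ ↦ 1, ← card_neighborFinset_eq_degree]
    simp
  have sum_out : ∑ z with out z = y, (h z - h (out z) + 1)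
      = ∑ z with out z = y, h z - (∑ z with out z = y, 1) * (h y - 1) := by
    rw [sum_mul, ← sum_sub_distrib]
    refine sum_congr rfl fun z hz ↦ ?_
    rw [(mem_filter.mp hz).2]
    ring
  rw [lapMatrix_mulVec_apply, hG.sum_neighborFinset, sum_out, degree_eq]
  ring

/- `h z - h (out z) + 1` is the flow of a current along the edge out of `z`; by the hitting time
equations every vertex is a source of strength `2`, except for the sink `x`. -/
lemma sum_hitting_sub_add_one (hG : IsFunctionalOrientation G out) (hconn : G.Connected)
    (x : V) (S : Finset V) :
    ∑ z ∈ S, (hitting G z x - hitting G (out z) x + 1)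
      = ∑ z with out z ∈ S, (hitting G z x - hitting G (out z) x + 1)
        + 2 * (#S - if x ∈ S then (esize G : ℝ) else 0) := by
  have balance (y : V) : hitting G y x - hitting G (out y) x + 1
      = ∑ z with out z = y, (hitting G z x - hitting G (out z) x + 1)
        + 2 * (1 - if y = x then (esize G : ℝ) else 0) := by
    have := hG.lapMatrix_mulVec_sub_degree (fun z ↦ hitting G z x) y
    rw [lapMatrix_mulVec_hitting hconn] at this
    split_ifs at this ⊢ <;> linarith
  rw [sum_congr rfl fun y _ ↦ balance y, sum_add_distrib, sum_fiberwise_eq_sum_filter univ S out]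
  simp [← mul_sum, sum_sub_distrib]

end IsFunctionalOrientation

end Orientation

section UnicyclicGraph

/-- The structure of a connected graph `G` whose only cycle is `c`: a rooted forest whose roots are
the vertices of the cycle. The parents of the roots are chosen so that the edges run around the
cycle. -/
structure CycleForest (G : SimpleGraph V) {l : ℕ} [NeZero l] (c : Fin l → V) extends
    RootedForest V where
  injective : Function.Injective c
  depth_eq_zero_iff : ∀ y, depth y = 0 ↔ y ∈ Set.range c
  parent_cycle : ∀ i, parent (c i) = c (i + 1)
  orientation : IsFunctionalOrientation G parent

variable {G : SimpleGraph V} {l : ℕ} [NeZero l] {c : Fin l → V}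

lemma fin_add_one_add_one_ne (hl : 3 ≤ l) (i : Fin l) : i + 1 + 1 ≠ i := by
  intro h
  have h₂ : (1 + 1 : Fin l) = 0 := by simpa [add_assoc] using h
  have := congrArg Fin.val h₂
  rw [Fin.val_add, Fin.val_one', Fin.val_zero, Nat.mod_eq_of_lt (by omega : 1 < l),
    Nat.mod_eq_of_lt (by omega)] at this
  omega

lemma exists_cycleForest [Fintype V] (hconn : G.Connected) (hcard : esize G = Fintype.card V)
    (hl : 3 ≤ l) (hinj : Function.Injective c) (hadj : ∀ i : Fin l, G.Adj (c i) (c (i + 1))) :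
    ∃ F : CycleForest G c, ∀ y, F.depth y = distToSet G y (Set.range c) := by
  have hc : (Set.range c).Nonempty := ⟨c 0, Set.mem_range_self 0⟩
  have zero_iff (y : V) := distToSet_eq_zero_iff (y := y) hconn hc
  have exists_out (y : V) : ∃ z, G.Adj y z ∧
      (distToSet G y (Set.range c) ≠ 0 →
        distToSet G z (Set.range c) + 1 = distToSet G y (Set.range c)) ∧
      ∀ i, y = c i → z = c (i + 1) := by
    by_cases hy : distToSet G y (Set.range c) = 0
    · obtain ⟨i, rfl⟩ := (zero_iff y).mp hy
      exact ⟨c (i + 1), hadj i, fun h ↦ absurd hy h, fun j hj ↦ by rw [hinj hj]⟩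
    · obtain ⟨z, hyz, hz⟩ := exists_adj_distToSet_add_one hconn hc hy
      exact ⟨z, hyz, fun _ ↦ hz, fun i hi ↦ absurd ((zero_iff y).mpr ⟨i, hi.symm⟩) hy⟩
  choose out adj_out depth_out out_cycle using exists_out
  have out_out_ne (y : V) : out (out y) ≠ y := by
    intro hy
    by_cases hy₀ : distToSet G y (Set.range c) = 0
    · obtain ⟨i, rfl⟩ := (zero_iff y).mp hy₀
      rw [out_cycle (c i) i rfl, out_cycle _ (i + 1) rfl] at hy
      exact fin_add_one_add_one_ne hl i (hinj hy)
    by_cases hout₀ : distToSet G (out y) (Set.range c) = 0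
    · obtain ⟨i, hi⟩ := (zero_iff _).mp hout₀
      rw [← hi, out_cycle _ i rfl] at hy
      exact hy₀ ((zero_iff y).mpr ⟨_, hy⟩)
    · have := depth_out y hy₀
      have := depth_out (out y) hout₀
      rw [hy] at this
      omega
  exact ⟨{ parent := out
           depth y := distToSet G y (Set.range c)
           depth_parent := depth_out
           injective := hinj
           depth_eq_zero_iff := zero_iff
           parent_cycle i := out_cycle (c i) i rfl
           orientation := isFunctionalOrientation_of_esize_eq_card hcard adj_out out_out_ne },
    fun _ ↦ rfl⟩

namespace CycleForest

variable (F : CycleForest G c) {x y r : V}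

lemma depth_cycle (i : Fin l) : F.depth (c i) = 0 :=
  (F.depth_eq_zero_iff _).mpr (Set.mem_range_self i)

lemma depth_parent_eq_zero (hr : F.depth r = 0) : F.depth (F.parent r) = 0 := by
  obtain ⟨i, rfl⟩ := (F.depth_eq_zero_iff r).mp hr
  rw [F.parent_cycle, F.depth_cycle]

lemma parent_injOn_roots : Set.InjOn F.parent {r | F.depth r = 0} := by
  intro r hr s hs hrs
  obtain ⟨i, rfl⟩ := (F.depth_eq_zero_iff r).mp hr
  obtain ⟨j, rfl⟩ := (F.depth_eq_zero_iff s).mp hs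
  rw [F.parent_cycle, F.parent_cycle] at hrs
  rw [add_right_cancel (F.injective hrs)]

lemma iterate_parent_cycle (i : Fin l) (j : ℕ) : F.parent^[j] (c i) = c (i + Fin.ofNat l j) := by
  induction j with
  | zero => simp
  | succ j ih =>
    have ofNat_succ : Fin.ofNat l (j + 1) = Fin.ofNat l j + 1 := by
      ext
      simp [Fin.val_add]
    rw [Function.iterate_succ_apply', ih, F.parent_cycle, ofNat_succ, add_assoc]

lemma depth_iterate_parent_root (hr : F.depth r = 0) (j : ℕ) : F.depth (F.parent^[j] r) = 0 := by
  obtain ⟨i, rfl⟩ := (F.depth_eq_zero_iff r).mp hr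
  rw [F.iterate_parent_cycle, F.depth_cycle]

lemma iterate_parent_length (hr : F.depth r = 0) : F.parent^[l] r = r := by
  obtain ⟨i, rfl⟩ := (F.depth_eq_zero_iff r).mp hr
  rw [F.iterate_parent_cycle, Fin.ofNat_self, add_zero]

lemma injOn_iterate_parent_root (hr : F.depth r = 0) :
    Set.InjOn (fun j ↦ F.parent^[j] r) (Set.Iio l) := by
  obtain ⟨i, rfl⟩ := (F.depth_eq_zero_iff r).mp hr
  intro j hj k hk hjk
  simp only [F.iterate_parent_cycle] at hjk
  have := congrArg Fin.val (add_left_cancel (F.injective hjk))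
  rwa [Fin.val_ofNat, Fin.val_ofNat, Nat.mod_eq_of_lt hj, Nat.mod_eq_of_lt hk] at this

variable [Fintype V]

lemma filter_depth_eq_zero_eq_image (hr : F.depth r = 0) :
    ({s | F.depth s = 0} : Finset V) = (range l).image fun j ↦ F.parent^[j] r := by
  obtain ⟨i, rfl⟩ := (F.depth_eq_zero_iff r).mp hr
  ext s
  simp only [mem_filter_univ, F.depth_eq_zero_iff, mem_image, mem_range, F.iterate_parent_cycle]
  constructor
  · rintro ⟨k, rfl⟩
    exact ⟨(k - i : Fin l), (k - i).isLt, by simp⟩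
  · rintro ⟨j, -, rfl⟩
    exact Set.mem_range_self _

lemma sum_filter_depth_eq_zero (hr : F.depth r = 0) (g : V → ℝ) :
    ∑ s with F.depth s = 0, g s = ∑ j ∈ range l, g (F.parent^[j] r) := by
  rw [F.filter_depth_eq_zero_eq_image hr]
  exact sum_image ((F.injOn_iterate_parent_root hr).mono fun j hj ↦ mem_range.mp hj)

lemma card_filter_depth_eq_zero : #{s | F.depth s = 0} = l := by
  have := F.sum_filter_depth_eq_zero (F.depth_cycle 0) fun _ ↦ 1
  simpa using this

lemma card_eq_depth_add_length (x : V) : Fintype.card V = F.depth x + l + #(F.offPath x) := by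
  rw [F.card_eq_depth_add x, F.card_filter_depth_eq_zero]

lemma filter_parent_mem_subtree (hy : F.depth y ≠ 0) :
    ({z | F.parent z ∈ F.subtree y} : Finset V) = (F.subtree y).erase y := by
  ext z
  rw [mem_filter_univ, mem_erase, and_comm]
  by_cases hz : F.depth z = 0
  · have root_notMem {s : V} (hs : F.depth s = 0) : s ∉ F.subtree y := fun h ↦ by
      have := F.depth_le_of_mem_subtree h
      omega
    simp [root_notMem hz, root_notMem (F.depth_parent_eq_zero hz)]
  · exact F.parent_mem_subtree_iff hz

lemma filter_parent_mem_subtree_parent (hr : F.depth r = 0) :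
    ({z | F.parent z ∈ F.subtree (F.parent r)} : Finset V)
      = insert r ((F.subtree (F.parent r)).erase (F.parent r)) := by
  ext z
  rw [mem_filter_univ, mem_insert, mem_erase]
  by_cases hz : F.depth z = 0
  · have mem_subtree_iff {s : V} (hs : F.depth s = 0) :
        s ∈ F.subtree (F.parent r) ↔ s = F.parent r :=
      ⟨fun h ↦ F.eq_of_mem_subtree_of_depth_le h (by omega), fun h ↦ h ▸ F.self_mem_subtree _⟩
    rw [mem_subtree_iff hz, mem_subtree_iff (F.depth_parent_eq_zero hz),
      F.parent_injOn_roots.eq_iff hz hr]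
    tauto
  · have hzr : z ≠ r := fun h ↦ hz (h ▸ hr)
    rw [F.parent_mem_subtree_iff hz]
    tauto

lemma two_mul_signedSize (hconn : G.Connected) (hcard : esize G = Fintype.card V) (x y : V) :
    2 * F.signedSize x y = ∑ z ∈ F.subtree y, (hitting G z x - hitting G (F.parent z) x + 1)
      - ∑ z with F.parent z ∈ F.subtree y, (hitting G z x - hitting G (F.parent z) x + 1) := by
  rw [F.orientation.sum_hitting_sub_add_one hconn x (F.subtree y), hcard, RootedForest.signedSize,
    RootedForest.size]
  ring

lemma hitting_sub_hitting_parent (hconn : G.Connected) (hcard : esize G = Fintype.card V) (x : V)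
    (hy : F.depth y ≠ 0) :
    hitting G y x - hitting G (F.parent y) x = 2 * F.signedSize x y - 1 := by
  rw [F.two_mul_signedSize hconn hcard, F.filter_parent_mem_subtree hy,
    ← add_sum_erase _ _ (F.self_mem_subtree y)]
  ring

lemma two_mul_hitting_parent_sub (hconn : G.Connected) (hcard : esize G = Fintype.card V) (x : V)
    (hr : F.depth r = 0) :
    2 * hitting G (F.parent r) x - hitting G r x - hitting G (F.parent (F.parent r)) x
      = 2 * F.signedSize x (F.parent r) := by
  have hr_notMem : r ∉ (F.subtree (F.parent r)).erase (F.parent r) := by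
    refine fun h ↦ ne_of_mem_erase h ?_
    exact F.eq_of_mem_subtree_of_depth_le (mem_of_mem_erase h) (by omega)
  rw [F.two_mul_signedSize hconn hcard, F.filter_parent_mem_subtree_parent hr,
    sum_insert hr_notMem, ← add_sum_erase _ _ (F.self_mem_subtree (F.parent r))]
  ring

lemma reverseCoverCost_eq (hconn : G.Connected) (hcard : esize G = Fintype.card V) (x : V) :
    reverseCoverCost G x
      = ∑ y with F.depth y ≠ 0, F.signedSize x y * (2 * F.signedSize x y - 1)
        + ∑ r with F.depth r = 0, F.size r * (hitting G r x - hitting G (F.root x) x) := by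
  have := F.sum_sub_eq_sum_signedSize_mul (fun y ↦ hitting G y x) x
  simp only [hitting_self, sub_zero] at this
  rw [reverseCoverCost, this]
  congr 1
  refine sum_congr rfl fun y hy ↦ ?_
  rw [F.hitting_sub_hitting_parent hconn hcard x (by simpa using hy)]

/-- The hitting time of `x` from the vertex `j` steps after the root of `x` on the cycle, relative
to the hitting time from that root. -/
noncomputable def cycleHitting (x : V) (j : ℕ) : ℝ :=
  hitting G (F.parent^[j] (F.root x)) x - hitting G (F.root x) x

lemma cycleHitting_zero (x : V) : F.cycleHitting x 0 = 0 := sub_self _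

lemma cycleHitting_length (x : V) : F.cycleHitting x (l - 1 + 1) = 0 := by
  rw [Nat.sub_one_add_one (NeZero.ne l), cycleHitting, F.iterate_parent_length (F.depth_root x),
    sub_self]

lemma notMem_subtree_iterate_parent_root (x : V) {j : ℕ} (hj : j < l - 1) :
    x ∉ F.subtree (F.parent^[j + 1] (F.root x)) := by
  have hr := F.depth_root x
  rw [F.mem_subtree_iff_root_eq (F.depth_iterate_parent_root hr _)]
  intro h
  have := F.injOn_iterate_parent_root hr (Set.mem_Iio.mpr (by omega : 0 < l))
    (Set.mem_Iio.mpr (by omega)) h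
  omega

lemma pathLaplacian_cycleHitting (hconn : G.Connected) (hcard : esize G = Fintype.card V) (x : V)
    {j : ℕ} (hj : j < l - 1) :
    pathLaplacian (F.cycleHitting x) j = 2 * F.size (F.parent^[j + 1] (F.root x)) := by
  have hr := F.depth_iterate_parent_root (F.depth_root x) j
  rw [← F.signedSize_of_notMem (F.notMem_subtree_iterate_parent_root x hj),
    Function.iterate_succ_apply', ← F.two_mul_hitting_parent_sub hconn hcard x hr]
  simp only [pathLaplacian, cycleHitting, Function.iterate_succ_apply']
  ring

lemma sum_filter_depth_eq_zero_eq_add (x : V) (g : V → ℝ) :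
    ∑ r with F.depth r = 0, g r
      = ∑ j ∈ range (l - 1), g (F.parent^[j + 1] (F.root x)) + g (F.root x) := by
  have hl : range l = range (l - 1 + 1) := by rw [Nat.sub_one_add_one (NeZero.ne l)]
  rw [F.sum_filter_depth_eq_zero (F.depth_root x), hl, sum_range_succ', Function.iterate_zero_apply]

lemma sum_size_mul_hitting_sub (x : V) :
    ∑ r with F.depth r = 0, F.size r * (hitting G r x - hitting G (F.root x) x)
      = ∑ j ∈ range (l - 1),
        (F.size (F.parent^[j + 1] (F.root x)) : ℝ) * F.cycleHitting x (j + 1) := by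
  simp [F.sum_filter_depth_eq_zero_eq_add x, cycleHitting]

lemma sum_size_iterate_parent_root_sub_one_le (x : V) :
    ∑ j ∈ range (l - 1), ((F.size (F.parent^[j + 1] (F.root x)) : ℝ) - 1) ≤ #(F.offPath x) := by
  have total : ∑ j ∈ range (l - 1), (F.size (F.parent^[j + 1] (F.root x)) : ℝ)
      + F.size (F.root x) = Fintype.card V := by
    rw [← F.sum_size_roots, F.sum_filter_depth_eq_zero_eq_add x]
  have le_size_root : (F.depth x + 1 : ℝ) ≤ F.size (F.root x) := by
    exact_mod_cast F.succ_le_size_iterate_parent le_rfl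
  have card_eq : (Fintype.card V : ℝ) = F.depth x + l + #(F.offPath x) := by
    exact_mod_cast F.card_eq_depth_add_length x
  rw [sum_sub_distrib, sum_const, card_range, nsmul_eq_mul, mul_one, Nat.cast_pred (NeZero.pos l)]
  linarith

lemma sum_size_mul_hitting_sub_le (hconn : G.Connected) (hcard : esize G = Fintype.card V)
    (x : V) :
    ∑ r with F.depth r = 0, F.size r * (hitting G r x - hitting G (F.root x) x)
      ≤ ((l : ℝ) ^ 3 - l) / 6 + #(F.offPath x) * (l * (l + #(F.offPath x)) / 2) := by
  let N (j : ℕ) : ℝ := F.size (F.parent^[j] (F.root x))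
  have one_le (j : ℕ) : 1 ≤ N j := Nat.one_le_cast.mpr (F.one_le_size _)
  have hl : ((l - 1 : ℕ) : ℝ) + 1 = l := by rw [Nat.cast_pred (NeZero.pos l), sub_add_cancel]
  have surplus_nonneg : 0 ≤ ∑ j ∈ range (l - 1), (N (j + 1) - 1) :=
    sum_nonneg fun j _ ↦ sub_nonneg.mpr (one_le _)
  have surplus_le : ∑ j ∈ range (l - 1), (N (j + 1) - 1) ≤ #(F.offPath x) :=
    F.sum_size_iterate_parent_root_sub_one_le x
  have hsum := sum_mul_le_of_pathLaplacian (N := N) (F.cycleHitting_zero x)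
    (F.cycleHitting_length x) (fun j hj ↦ F.pathLaplacian_cycleHitting hconn hcard x hj)
    (fun j _ ↦ one_le _) rfl
  rw [hl] at hsum
  rw [F.sum_size_mul_hitting_sub x]
  refine hsum.trans ?_
  gcongr

lemma sum_size_mul_hitting_sub_eq (hconn : G.Connected) (hcard : esize G = Fintype.card V)
    (hx : F.offPath x = ∅) :
    ∑ r with F.depth r = 0, F.size r * (hitting G r x - hitting G (F.root x) x)
      = ((l : ℝ) ^ 3 - l) / 6 := by
  have size_eq (j : ℕ) (hj : j < l - 1) : F.size (F.parent^[j + 1] (F.root x)) = 1 :=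
    F.size_eq_one hx (F.notMem_subtree_iterate_parent_root x hj)
  have hl : ((l - 1 : ℕ) : ℝ) + 1 = l := by rw [Nat.cast_pred (NeZero.pos l), sub_add_cancel]
  have hsum := sum_mul_eq_of_pathLaplacian_eq_two (F.cycleHitting_zero x) (F.cycleHitting_length x)
    fun j hj ↦ by rw [F.pathLaplacian_cycleHitting hconn hcard x hj, size_eq j hj, Nat.cast_one,
      mul_one]
  rw [hl] at hsum
  rw [F.sum_size_mul_hitting_sub x, ← hsum]
  refine sum_congr rfl fun j hj ↦ ?_
  rw [size_eq j (mem_range.mp hj), Nat.cast_one, one_mul]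

lemma reverseCoverCost_le (hconn : G.Connected) (hcard : esize G = Fintype.card V) (x : V) :
    reverseCoverCost G x ≤ -(l : ℝ) ^ 3 / 2 + (l : ℝ) ^ 2 / 2 + tailCost (Fintype.card V)
      - #(F.offPath x) * (#(F.offPath x) + l) * (3 * l - 2) / 2 := by
  have nonroot_part := F.sum_signedSize_le x
  have root_part := F.sum_size_mul_hitting_sub_le hconn hcard x
  have card_eq : (Fintype.card V : ℝ) - F.depth x = l + #(F.offPath x) := by
    rw [F.card_eq_depth_add_length x]
    push_cast
    ring
  rw [F.reverseCoverCost_eq hconn hcard]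
  refine (add_le_add nonroot_part root_part).trans_eq ?_
  rw [card_eq, tailCost, tailCost]
  ring

lemma reverseCoverCost_eq_of_offPath_eq_empty (hconn : G.Connected)
    (hcard : esize G = Fintype.card V) (hx : F.offPath x = ∅) :
    reverseCoverCost G x = -(l : ℝ) ^ 3 / 2 + (l : ℝ) ^ 2 / 2 + tailCost (Fintype.card V) := by
  have card_eq : (Fintype.card V : ℝ) - F.depth x = l := by
    rw [F.card_eq_depth_add_length x, hx, card_empty]
    push_cast
    ring
  rw [F.reverseCoverCost_eq hconn hcard, F.sum_signedSize_eq hx,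
    F.sum_size_mul_hitting_sub_eq hconn hcard hx, card_eq, tailCost, tailCost]
  ring

lemma reverseCoverCost_eq_iff (hconn : G.Connected) (hcard : esize G = Fintype.card V) (x : V) :
    reverseCoverCost G x = -(l : ℝ) ^ 3 / 2 + (l : ℝ) ^ 2 / 2 + tailCost (Fintype.card V)
      ↔ F.offPath x = ∅ := by
  refine ⟨fun heq ↦ ?_, F.reverseCoverCost_eq_of_offPath_eq_empty hconn hcard⟩
  by_contra hne
  have hpos : (0 : ℝ) < #(F.offPath x) := by
    exact_mod_cast card_pos.mpr (nonempty_iff_ne_empty.mpr hne)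
  have hl : (1 : ℝ) ≤ l := by exact_mod_cast NeZero.one_le
  have hle := F.reverseCoverCost_le hconn hcard x
  have deficit_pos : 0 < #(F.offPath x) * (#(F.offPath x) + l) * (3 * l - 2) / (2 : ℝ) := by
    have : (0 : ℝ) < 3 * l - 2 := by linarith
    positivity
  linarith

end CycleForest

end UnicyclicGraph

section Lollipop

/-- The orientation of the lollipop `P_n^l` with one outgoing edge per vertex: the cycle edges run
around the cycle, the path edges run towards it. -/
def lollipopParent (l a : ℕ) : ℕ := if a + 1 < l then a + 1 else if a ≤ l then 0 else a - 1

variable {n l : ℕ}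

lemma lollipopParent_lt {a : ℕ} (ha : a < n) (hl : l ≤ n) : lollipopParent l a < n := by
  rw [lollipopParent]
  split_ifs <;> omega

lemma lollipop_adj_iff (hl : 3 ≤ l) (a b : Fin n) :
    (lollipop n l).Adj a b ↔ lollipopParent l a = b ∨ lollipopParent l b = a := by
  simp only [lollipop, fromRel_adj, ne_eq, Fin.ext_iff, lollipopParent]
  split_ifs <;> omega

end Lollipop

namespace CycleForest

variable {G : SimpleGraph V} {l : ℕ} [NeZero l] {c : Fin l → V}
variable (F : CycleForest G c) {x : V} {a : ℕ}

/-- The labelling of the path from `x` to the cycle and of the cycle by the vertices of a lollipop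
whose end vertex corresponds to `x`. -/
def lollipopVertex (x : V) (a : ℕ) : V :=
  if a < l then F.parent^[a] (F.root x) else F.parent^[F.depth x + l - 1 - a] x

lemma lollipopVertex_of_lt (ha : a < l) : F.lollipopVertex x a = F.parent^[a] (F.root x) :=
  if_pos ha

lemma lollipopVertex_of_le (ha : l ≤ a) :
    F.lollipopVertex x a = F.parent^[F.depth x + l - 1 - a] x :=
  if_neg ha.not_gt

lemma depth_lollipopVertex (ha : a < F.depth x + l) :
    F.depth (F.lollipopVertex x a) = a + 1 - l := by
  by_cases hal : a < l
  · rw [F.lollipopVertex_of_lt hal, F.depth_iterate_parent_root (F.depth_root x)]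
    omega
  · rw [F.lollipopVertex_of_le (not_lt.mp hal), F.depth_iterate_parent (by omega)]
    omega

lemma injOn_lollipopVertex (x : V) :
    Set.InjOn (F.lollipopVertex x) (Set.Iio (F.depth x + l)) := by
  intro a ha b hb hab
  rw [Set.mem_Iio] at ha hb
  have hdepth := congrArg F.depth hab
  rw [F.depth_lollipopVertex ha, F.depth_lollipopVertex hb] at hdepth
  by_cases hal : a < l
  · have hbl : b < l := by omega
    rw [F.lollipopVertex_of_lt hal, F.lollipopVertex_of_lt hbl] at hab
    exact F.injOn_iterate_parent_root (F.depth_root x) hal hbl hab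
  · omega

lemma parent_lollipopVertex (ha : a < F.depth x + l) :
    F.parent (F.lollipopVertex x a) = F.lollipopVertex x (lollipopParent l a) := by
  have hl : 0 < l := NeZero.pos l
  rw [lollipopParent]
  split_ifs with hcycle hbase
  · rw [F.lollipopVertex_of_lt hcycle, F.lollipopVertex_of_lt (by omega),
      Function.iterate_succ_apply']
  · rw [F.lollipopVertex_of_lt hl, Function.iterate_zero_apply]
    obtain rfl | hal := hbase.eq_or_lt
    · rw [F.lollipopVertex_of_le le_rfl, ← Function.iterate_succ_apply' F.parent, RootedForest.root]
      congr 2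
      omega
    · rw [F.lollipopVertex_of_lt hal, ← Function.iterate_succ_apply' F.parent,
        show a.succ = l by omega, F.iterate_parent_length (F.depth_root x)]
  · rw [F.lollipopVertex_of_le (by omega), F.lollipopVertex_of_le (by omega),
      ← Function.iterate_succ_apply' F.parent]
    congr 2
    omega

lemma nonempty_lollipop_iso [Fintype V] (hl : 3 ≤ l) (hx : F.offPath x = ∅) :
    Nonempty (lollipop (Fintype.card V) l ≃g G) := by
  have card_eq : Fintype.card V = F.depth x + l := by simpa [hx] using F.card_eq_depth_add_length x
  let φ (a : Fin (Fintype.card V)) : V := F.lollipopVertex x a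
  have lt_card (a : Fin (Fintype.card V)) : (a : ℕ) < F.depth x + l := a.isLt.trans_eq card_eq
  have injective : Function.Injective φ := fun a b hab ↦
    Fin.ext (F.injOn_lollipopVertex x (lt_card a) (lt_card b) hab)
  have bijective : Function.Bijective φ :=
    (Fintype.bijective_iff_injective_and_card φ).mpr ⟨injective, Fintype.card_fin _⟩
  have parent_eq_iff (a b : Fin (Fintype.card V)) :
      F.parent (φ a) = φ b ↔ lollipopParent l a = b := by
    rw [F.parent_lollipopVertex (lt_card a)]
    refine (F.injOn_lollipopVertex x).eq_iff ?_ (lt_card b)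
    exact lollipopParent_lt (lt_card a) (Nat.le_add_left l _)
  refine ⟨⟨Equiv.ofBijective φ bijective, fun {a b} ↦ ?_⟩⟩
  rw [Equiv.ofBijective_apply, Equiv.ofBijective_apply, F.orientation.adj_iff, parent_eq_iff,
    parent_eq_iff, lollipop_adj_iff hl]

end CycleForest

/-- For an `n`-vertex unicyclic graph `G` with cycle length `l`
and any `x ∈ V(G)`, `RC(x) ≤ −l³/2 + l²/2 + n(n−1)(4n+1)/6`, with equality
iff `G ≅ P_n^l` and `x` is the vertex at distance `n − l` from the cycle. -/
theorem reverseCoverCost_upper [Fintype V] (G : SimpleGraph V) (n l : ℕ) [NeZero l]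
    (hn : Fintype.card V = n) (hconn : G.Connected) (huni : esize G = n)
    (hl : 3 ≤ l) (c : Fin l → V) (hinj : Function.Injective c)
    (hadj : ∀ i : Fin l, G.Adj (c i) (c (i + 1))) (x : V) :
    reverseCoverCost G x ≤ -(l : ℝ)^3/2 + (l : ℝ)^2/2
        + (n : ℝ)*((n : ℝ)-1)*(4*(n : ℝ)+1)/6 ∧
    (reverseCoverCost G x = -(l : ℝ)^3/2 + (l : ℝ)^2/2
        + (n : ℝ)*((n : ℝ)-1)*(4*(n : ℝ)+1)/6 ↔
      Nonempty (lollipop n l ≃g G) ∧ distToSet G x (Set.range c) = n - l) := by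
  subst hn
  obtain ⟨F, depth_eq⟩ := exists_cycleForest hconn huni hl hinj hadj
  have bound_eq : -(l : ℝ) ^ 3 / 2 + (l : ℝ) ^ 2 / 2 + (Fintype.card V : ℝ)
      * ((Fintype.card V : ℝ) - 1) * (4 * (Fintype.card V : ℝ) + 1) / 6
      = -(l : ℝ) ^ 3 / 2 + (l : ℝ) ^ 2 / 2 + tailCost (Fintype.card V) := rfl
  rw [bound_eq, F.reverseCoverCost_eq_iff hconn huni, ← depth_eq]
  have card_eq := F.card_eq_depth_add_length x
  refine ⟨(F.reverseCoverCost_le hconn huni x).trans (sub_le_self _ ?_), fun hx ↦ ?_, fun hx ↦ ?_⟩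
  · have : (3 : ℝ) ≤ l := by exact_mod_cast hl
    have : (0 : ℝ) ≤ 3 * l - 2 := by linarith
    positivity
  · rw [hx, card_empty] at card_eq
    exact ⟨F.nonempty_lollipop_iso hl hx, by omega⟩
  · exact card_eq_zero.mp (by omega)
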